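/- arXiv:1401.2375 — 6 statements merged into one kernel-verified Lean document; each statement's English description precedes it below -/
import Mathlib

section
/- Let c_0, c_1, c_2, c_3 and u, ν, μ be real analytic on an open interval I with u, μ nowhere vanishing. Define γ_0 = (c_0 + 3c_1ν + 3c_2ν² + c_3ν³ − ν')/(μu), γ_1 = (c_1 + 2c_2ν + c_3ν²)/μ − u'/(3μu), γ_2 = u(c_2 + c_3ν)/μ, γ_3 = u²c_3/μ, and D := μ⁻¹ d/dx. Then the transformed invariant (s_3)_1 := γ_0γ_3² − 3γ_1γ_2γ_3 + 2γ_2³ + γ_3·Dγ_2 − γ_2·Dγ_3 satisfies (s_3)_1 = (u/μ)³ · s_3 on I, where s_3 = c_0c_3² − 3c_1c_2c_3 + 2c_2³ + c_3c_2' − c_2c_3'. -/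
open Set

/-- The transformed coefficient `γ₀` under `y = uη + ν`, `dξ/dx = μ`. -/
noncomputable def gam0 (c0 c1 c2 c3 u v m : ℝ → ℝ) : ℝ → ℝ := fun x =>
  (c0 x + 3 * c1 x * v x + 3 * c2 x * (v x) ^ 2 + c3 x * (v x) ^ 3 - deriv v x) / (m x * u x)

/-- The transformed coefficient `γ₁`. -/
noncomputable def gam1 (c1 c2 c3 u v m : ℝ → ℝ) : ℝ → ℝ := fun x =>
  (c1 x + 2 * c2 x * v x + c3 x * (v x) ^ 2) / m x - deriv u x / (3 * m x * u x)

/-- The transformed coefficient `γ₂`. -/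
noncomputable def gam2 (c2 c3 u v m : ℝ → ℝ) : ℝ → ℝ := fun x =>
  u x * (c2 x + c3 x * v x) / m x

/-- The transformed coefficient `γ₃`. -/
noncomputable def gam3 (c3 u m : ℝ → ℝ) : ℝ → ℝ := fun x =>
  (u x) ^ 2 * c3 x / m x

/-- The relative invariant `s₃ = c₀c₃² − 3c₁c₂c₃ + 2c₂³ + c₃c₂′ − c₂c₃′`. -/
noncomputable def s3 (c0 c1 c2 c3 : ℝ → ℝ) : ℝ → ℝ := fun x =>
  c0 x * (c3 x) ^ 2 - 3 * c1 x * c2 x * c3 x + 2 * (c2 x) ^ 3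
    + c3 x * deriv c2 x - c2 x * deriv c3 x

/-- `s₃` built from coefficients `g0,…,g3`, with the derivative `d/dξ = μ⁻¹ d/dx`. -/
noncomputable def s3D (g0 g1 g2 g3 m : ℝ → ℝ) : ℝ → ℝ := fun x =>
  g0 x * (g3 x) ^ 2 - 3 * g1 x * g2 x * g3 x + 2 * (g2 x) ^ 3
    + g3 x * ((m x)⁻¹ * deriv g2 x) - g2 x * ((m x)⁻¹ * deriv g3 x)

/-- `s₃` is a relative invariant of weight 3:
`(s₃)₁ = (u/μ)³ · s₃` under the pseudo-group `y = uη + ν`, `dξ/dx = μ`. -/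
theorem s3_relative_invariant
    (a b : ℝ) (c0 c1 c2 c3 u v m : ℝ → ℝ)
    (hc0 : AnalyticOnNhd ℝ c0 (Ioo a b)) (hc1 : AnalyticOnNhd ℝ c1 (Ioo a b))
    (hc2 : AnalyticOnNhd ℝ c2 (Ioo a b)) (hc3 : AnalyticOnNhd ℝ c3 (Ioo a b))
    (hu : AnalyticOnNhd ℝ u (Ioo a b)) (hv : AnalyticOnNhd ℝ v (Ioo a b))
    (hm : AnalyticOnNhd ℝ m (Ioo a b))
    (hu0 : ∀ x ∈ Ioo a b, u x ≠ 0) (hm0 : ∀ x ∈ Ioo a b, m x ≠ 0) :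
    ∀ x ∈ Ioo a b,
      s3D (gam0 c0 c1 c2 c3 u v m) (gam1 c1 c2 c3 u v m)
          (gam2 c2 c3 u v m) (gam3 c3 u m) m x
        = (u x / m x) ^ 3 * s3 c0 c1 c2 c3 x := by
  intro x hx
  have d2 := (hc2 x hx).differentiableAt.hasDerivAt
  have d3 := (hc3 x hx).differentiableAt.hasDerivAt
  have du := (hu x hx).differentiableAt.hasDerivAt
  have dv := (hv x hx).differentiableAt.hasDerivAt
  have dm := (hm x hx).differentiableAt.hasDerivAt
  have hux := hu0 x hx
  have hmx := hm0 x hx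
  have e2 : deriv (gam2 c2 c3 u v m) x = _ :=
    ((du.mul (d2.add (d3.mul dv))).div dm hmx).deriv
  have e3 : deriv (gam3 c3 u m) x = _ :=
    (((du.pow 2).mul d3).div dm hmx).deriv
  simp only [s3D, e2, e3]
  simp only [gam0, gam1, gam2, gam3, s3, Pi.mul_apply, Pi.add_apply, Pi.pow_apply]
  field_simp
  push_cast
  ring
end

section
/- Let c_0, c_1, c_2, c_3 and u, ν, μ be real analytic on an open interval I with u, μ nowhere vanishing, and let γ_0, γ_1, γ_2, γ_3 be the transformed coefficients given by γ_0 = (c_0 + 3c_1ν + 3c_2ν² + c_3ν³ − ν')/(μu), γ_1 = (c_1 + 2c_2ν + c_3ν²)/μ − u'/(3μu), γ_2 = u(c_2 + c_3ν)/μ, γ_3 = u²c_3/μ, with D := μ⁻¹ d/dx. Define the hierarchies s_3 = c_0c_3² − 3c_1c_2c_3 + 2c_2³ + c_3c_2' − c_2c_3', s_{2n+1} = c_3·s_{2n−1}' − (2n−1)·s_{2n−1}·(c_3' + 3(c_1c_3 − c_2²)), and analogously (s_3)_1 = γ_0γ_3² − 3γ_1γ_2γ_3 + 2γ_2³ + γ_3·Dγ_2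 − γ_2·Dγ_3, (s_{2n+1})_1 = γ_3·D(s_{2n−1})_1 − (2n−1)·(s_{2n−1})_1·(Dγ_3 + 3(γ_1γ_3 − γ_2²)). Then for every n ≥ 1, (s_{2n+1})_1 = (u/μ)^{2n+1} · s_{2n+1} on I. -/
open Set

/-- The Liouville hierarchy: `sH k = s_{2k+3}` (`sH 0 = s₃`). -/
noncomputable def sH (c0 c1 c2 c3 : ℝ → ℝ) : ℕ → ℝ → ℝ
  | 0 => s3 c0 c1 c2 c3
  | k + 1 => fun x =>
      c3 x * deriv (sH c0 c1 c2 c3 k) x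
        - (2 * (k : ℝ) + 3) * sH c0 c1 c2 c3 k x
          * (deriv c3 x + 3 * (c1 x * c3 x - (c2 x) ^ 2))

/-- The hierarchy built from `g0,…,g3` and the derivation `D = μ⁻¹ d/dx`:
`sHD k = (s_{2k+3})₁`. -/
noncomputable def sHD (g0 g1 g2 g3 m : ℝ → ℝ) : ℕ → ℝ → ℝ
  | 0 => s3D g0 g1 g2 g3 m
  | k + 1 => fun x =>
      g3 x * ((m x)⁻¹ * deriv (sHD g0 g1 g2 g3 m k) x)
        - (2 * (k : ℝ) + 3) * sHD g0 g1 g2 g3 m k x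
          * ((m x)⁻¹ * deriv g3 x + 3 * (g1 x * g3 x - (g2 x) ^ 2))

lemma sH_analytic (S : Set ℝ) (c0 c1 c2 c3 : ℝ → ℝ)
    (hc0 : AnalyticOnNhd ℝ c0 S) (hc1 : AnalyticOnNhd ℝ c1 S)
    (hc2 : AnalyticOnNhd ℝ c2 S) (hc3 : AnalyticOnNhd ℝ c3 S) (k : ℕ) :
    AnalyticOnNhd ℝ (sH c0 c1 c2 c3 k) S := by
  intro x hx
  have h0 := hc0 x hx
  have h1 := hc1 x hx
  have h2 := hc2 x hx
  have h3 := hc3 x hx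
  have h2d := h2.deriv
  have h3d := h3.deriv
  induction k with
  | zero =>
    show AnalyticAt ℝ (fun x => _) x
    simp only [sH, s3]
    fun_prop
  | succ k ih =>
    have ihd := ih.deriv
    simp only [sH]
    fun_prop

/-- the hierarchy `s_{2n+1}` (`n ≥ 1`, i.e. `s_{2k+3}` for `k ≥ 0`) consists of
relative invariants: `(s_{2n+1})₁ = (u/μ)^{2n+1} · s_{2n+1}`. -/
theorem hierarchy_relative_invariant
    (a b : ℝ) (c0 c1 c2 c3 u v m : ℝ → ℝ)
    (hc0 : AnalyticOnNhd ℝ c0 (Ioo a b)) (hc1 : AnalyticOnNhd ℝ c1 (Ioo a b))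
    (hc2 : AnalyticOnNhd ℝ c2 (Ioo a b)) (hc3 : AnalyticOnNhd ℝ c3 (Ioo a b))
    (hu : AnalyticOnNhd ℝ u (Ioo a b)) (hv : AnalyticOnNhd ℝ v (Ioo a b))
    (hm : AnalyticOnNhd ℝ m (Ioo a b))
    (hu0 : ∀ x ∈ Ioo a b, u x ≠ 0) (hm0 : ∀ x ∈ Ioo a b, m x ≠ 0) :
    ∀ k : ℕ, ∀ x ∈ Ioo a b,
      sHD (gam0 c0 c1 c2 c3 u v m) (gam1 c1 c2 c3 u v m)
          (gam2 c2 c3 u v m) (gam3 c3 u m) m k x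
        = (u x / m x) ^ (2 * k + 3) * sH c0 c1 c2 c3 k x := by
  have dg3 : ∀ x ∈ Ioo a b, deriv (gam3 c3 u m) x =
      ((2 * u x * deriv u x * c3 x + u x ^ 2 * deriv c3 x) * m x
        - u x ^ 2 * c3 x * deriv m x) / m x ^ 2 := by
    intro x hx
    have h3 := (hc3 x hx).differentiableAt.hasDerivAt
    have h4 := (hu x hx).differentiableAt.hasDerivAt
    have h6 := (hm x hx).differentiableAt.hasDerivAt
    have h := (((h4.pow 2).mul h3).div h6 (hm0 x hx)).deriv
    refine Eq.trans h ?_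
    simp
  have dg2 : ∀ x ∈ Ioo a b, deriv (gam2 c2 c3 u v m) x =
      ((deriv u x * (c2 x + c3 x * v x)
        + u x * (deriv c2 x + (deriv c3 x * v x + c3 x * deriv v x))) * m x
        - u x * (c2 x + c3 x * v x) * deriv m x) / m x ^ 2 := by
    intro x hx
    have h2 := (hc2 x hx).differentiableAt.hasDerivAt
    have h3 := (hc3 x hx).differentiableAt.hasDerivAt
    have h4 := (hu x hx).differentiableAt.hasDerivAt
    have h5 := (hv x hx).differentiableAt.hasDerivAt
    have h6 := (hm x hx).differentiableAt.hasDerivAt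
    exact ((h4.mul (h2.add (h3.mul h5))).div h6 (hm0 x hx)).deriv
  intro k
  induction k with
  | zero =>
    intro x hx
    have hux := hu0 x hx
    have hmx := hm0 x hx
    simp only [sHD, sH, s3D, s3, dg2 x hx, dg3 x hx]
    simp only [gam0, gam1, gam2, gam3, mul_zero, zero_add]
    field_simp
    ring
  | succ k ih =>
    intro x hx
    have hux := hu0 x hx
    have hmx := hm0 x hx
    have h4 := (hu x hx).differentiableAt.hasDerivAt
    have h6 := (hm x hx).differentiableAt.hasDerivAt
    have hs := (sH_analytic _ c0 c1 c2 c3 hc0 hc1 hc2 hc3 k x hx).differentiableAt.hasDerivAt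
    have hev := Filter.eventuallyEq_of_mem (Ioo_mem_nhds hx.1 hx.2) ih
    have hd := hev.deriv_eq.trans (((h4.div h6 hmx).pow (2 * k + 3)).mul hs).deriv
    simp only [sHD, sH, dg3 x hx, hd, ih x hx]
    simp only [gam1, gam2, gam3, Pi.div_apply, Pi.pow_apply]
    have e1 : 2 * k + 3 - 1 = 2 * k + 2 := rfl
    have e2 : 2 * (k + 1) + 3 = 2 * k + 2 + 3 := by ring
    have e3 : 2 * k + 3 = 2 * k + 2 + 1 := rfl
    rw [e1, e2]
    push_cast
    rw [pow_add _ (2 * k + 2) 3, e3, pow_succ _ (2 * k + 2)]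
    generalize (u x / m x) ^ (2 * k + 2) = P
    field_simp
    ring
end

section
/- Let c_0, c_1, c_2, c_3 be real analytic on an open interval I with c_3 nowhere vanishing, let u, ν, μ be real analytic с u, μ nowhere vanishing, and let γ_i be the transformed coefficients of the Abel equation. Let U be real analytic, nowhere vanishing, with U' = ((c_3' + 3(c_1c_3 − c_2²))/c_3)·U, and set Ũ := U/u. Then the absolute invariant is preserved: (s_3)_1/(γ_3·Ũ)³ = s_3/(c_3·U)³ on I, i.e. J_1 = J. -/
open Set

/-- `J = s₃/(c₃U)³` is an absolute invariant: `J₁ = J`, where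
`J₁ = (s₃)₁/(γ₃Ũ)³` and `Ũ = U/u`. -/
theorem J_absolute_invariant
    (a b : ℝ) (c0 c1 c2 c3 u v m U : ℝ → ℝ)
    (hc0 : AnalyticOnNhd ℝ c0 (Ioo a b)) (hc1 : AnalyticOnNhd ℝ c1 (Ioo a b))
    (hc2 : AnalyticOnNhd ℝ c2 (Ioo a b)) (hc3 : AnalyticOnNhd ℝ c3 (Ioo a b))
    (hc30 : ∀ x ∈ Ioo a b, c3 x ≠ 0)
    (hu : AnalyticOnNhd ℝ u (Ioo a b)) (hv : AnalyticOnNhd ℝ v (Ioo a b))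
    (hm : AnalyticOnNhd ℝ m (Ioo a b))
    (hu0 : ∀ x ∈ Ioo a b, u x ≠ 0) (hm0 : ∀ x ∈ Ioo a b, m x ≠ 0)
    (hU : AnalyticOnNhd ℝ U (Ioo a b)) (hU0 : ∀ x ∈ Ioo a b, U x ≠ 0)
    (hUode : ∀ x ∈ Ioo a b, HasDerivAt U
      (((deriv c3 x + 3 * (c1 x * c3 x - (c2 x) ^ 2)) / c3 x) * U x) x) :
    ∀ x ∈ Ioo a b,
      s3D (gam0 c0 c1 c2 c3 u v m) (gam1 c1 c2 c3 u v m)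
          (gam2 c2 c3 u v m) (gam3 c3 u m) m x
        / (gam3 c3 u m x * (U x / u x)) ^ 3
      = s3 c0 c1 c2 c3 x / (c3 x * U x) ^ 3 := by
  intro x hx
  have h3 := hc30 x hx
  have hu1 := hu0 x hx
  have hm1 := hm0 x hx
  have hU1 := hU0 x hx
  have d2 := (hc2 x hx).differentiableAt.hasDerivAt
  have d3 := (hc3 x hx).differentiableAt.hasDerivAt
  have du := (hu x hx).differentiableAt.hasDerivAt
  have dv := (hv x hx).differentiableAt.hasDerivAt
  have dm := (hm x hx).differentiableAt.hasDerivAt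
  have e2 : deriv (gam2 c2 c3 u v m) x = _ :=
    ((du.mul (d2.add (d3.mul dv))).div dm hm1).deriv
  have e3 : deriv (gam3 c3 u m) x = _ :=
    (((du.pow 2).mul d3).div dm hm1).deriv
  simp only [Pi.mul_apply, Pi.add_apply, Pi.pow_apply] at e2 e3
  have key : s3D (gam0 c0 c1 c2 c3 u v m) (gam1 c1 c2 c3 u v m)
      (gam2 c2 c3 u v m) (gam3 c3 u m) m x = (u x / m x) ^ 3 * s3 c0 c1 c2 c3 x := by
    simp only [s3D, s3, e2, e3]
    simp only [gam0, gam1, gam2, gam3]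
    field_simp
    push_cast
    ring
  have k2 : gam3 c3 u m x * (U x / u x) = (u x / m x) * (c3 x * U x) := by
    simp only [gam3]
    field_simp
  rw [key, k2, mul_pow (u x / m x)]
  exact mul_div_mul_left _ _ (pow_ne_zero 3 (div_ne_zero hu1 hm1))
end

section
/- Let c_0, c_1, c_2, c_3 be real analytic on an open interval I with c_3 nowhere vanishing, let u, ν, μ be real analytic with u, μ nowhere vanishing, and let γ_1, γ_2, γ_3 be the transformed coefficients of the Abel equation, with D := μ⁻¹ d/dx. Then the quantity r := (c_3' + 3(c_1c_3 − c_2²))/c_3 transforms as an affine connection: on I, (Dγ_3 + 3(γ_1γ_3 − γ_2²))/γ_3 = (1/μ)·[ (c_3' + 3(c_1c_3 − c_2²))/c_3 + (u'/u − μ'/μ) ]; equivalently, μ·(Dγ_3 + 3(γ_1γ_3 − γ_2²))/γ_3 − (d/dx)log(u/μ) = (c_3' + 3(c_1c_3 − c_2²))/c_3. -/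
open Set

/-- `r = (c₃′ + 3(c₁c₃ − c₂²))/c₃` transforms as an affine connection under the
pseudo-group `y = uη + ν`, `dξ/dx = μ`. -/
theorem connection_transformation_law
    (a b : ℝ) (c0 c1 c2 c3 u v m : ℝ → ℝ)
    (hc0 : AnalyticOnNhd ℝ c0 (Ioo a b)) (hc1 : AnalyticOnNhd ℝ c1 (Ioo a b))
    (hc2 : AnalyticOnNhd ℝ c2 (Ioo a b)) (hc3 : AnalyticOnNhd ℝ c3 (Ioo a b))
    (hc30 : ∀ x ∈ Ioo a b, c3 x ≠ 0)
    (hu : AnalyticOnNhd ℝ u (Ioo a b)) (hv : AnalyticOnNhd ℝ v (Ioo a b))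
    (hm : AnalyticOnNhd ℝ m (Ioo a b))
    (hu0 : ∀ x ∈ Ioo a b, u x ≠ 0) (hm0 : ∀ x ∈ Ioo a b, m x ≠ 0) :
    ∀ x ∈ Ioo a b,
      (((m x)⁻¹ * deriv (gam3 c3 u m) x
          + 3 * (gam1 c1 c2 c3 u v m x * gam3 c3 u m x - (gam2 c2 c3 u v m x) ^ 2))
        / gam3 c3 u m x
        = (1 / m x) * ((deriv c3 x + 3 * (c1 x * c3 x - (c2 x) ^ 2)) / c3 x
            + (deriv u x / u x - deriv m x / m x))) ∧
      (m x * (((m x)⁻¹ * deriv (gam3 c3 u m) x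
          + 3 * (gam1 c1 c2 c3 u v m x * gam3 c3 u m x - (gam2 c2 c3 u v m x) ^ 2))
        / gam3 c3 u m x)
        - deriv (fun t => Real.log (u t / m t)) x
        = (deriv c3 x + 3 * (c1 x * c3 x - (c2 x) ^ 2)) / c3 x) := by
  intro x hx
  have hc := hc30 x hx
  have hux := hu0 x hx
  have hmx := hm0 x hx
  have dc := (hc3 x hx).differentiableAt.hasDerivAt
  have du := (hu x hx).differentiableAt.hasDerivAt
  have dm := (hm x hx).differentiableAt.hasDerivAt
  have hg : deriv (gam3 c3 u m) x
      = ((2 * u x * deriv u x * c3 x + u x ^ 2 * deriv c3 x) * m x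
          - u x ^ 2 * c3 x * deriv m x) / m x ^ 2 := by
    have h := (((du.pow 2).mul dc).div dm hmx).deriv
    refine Eq.trans ?_ (h.trans ?_)
    · rfl
    · simp
  have hl : deriv (fun t => Real.log (u t / m t)) x
      = deriv u x / u x - deriv m x / m x := by
    have h := ((du.div dm hmx).log (div_ne_zero hux hmx)).deriv
    refine Eq.trans ?_ (h.trans ?_)
    · rfl
    · simp only [Pi.div_apply]
      field_simp
  have key : ((m x)⁻¹ * deriv (gam3 c3 u m) x
          + 3 * (gam1 c1 c2 c3 u v m x * gam3 c3 u m x - (gam2 c2 c3 u v m x) ^ 2))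
        / gam3 c3 u m x
        = (1 / m x) * ((deriv c3 x + 3 * (c1 x * c3 x - (c2 x) ^ 2)) / c3 x
            + (deriv u x / u x - deriv m x / m x)) := by
    rw [hg]
    simp only [gam1, gam2, gam3]
    field_simp
    ring
  refine ⟨key, ?_⟩
  rw [key, hl]
  field_simp
  ring
end

section
/- Let c_0, c_1, c_2, c_3 be real analytic on an open interval I with c_3 nowhere vanishing, let u, ν, μ be real analytic with u, μ nowhere vanishing, and let γ_1, γ_2, γ_3 be the transformed coefficients of the Abel equation, with D := μ⁻¹ d/dx, r := (c_3' + 3(c_1c_3 − c_2²))/c_3, and R̃ := (Dγ_3 + 3(γ_1γ_3 − γ_2²))/γ_3. Then for every integer n ∈ ℤ and every differentiable function φ : I → ℝ, setting φ̃ := (u/μ)ⁿ·φ, one has Dφ̃ − n·R̃·φ̃ = (1/μ)·(u/μ)ⁿ·(φ' − n·r·φ) on I. In other words, ∇_n := d/dx − n·(c_3' + 3(c_1c_3 − c_2²))/c_3 is a covariant derivative sending tensors of degree n (quantities transforming with the factor (u/μ)ⁿ) to tensors of degree n+1. -/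
open Set

/-- The transformed connection `R̃ = (Dγ₃ + 3(γ₁γ₃ − γ₂²))/γ₃`, `D = μ⁻¹ d/dx`. -/
noncomputable def Rtil (c1 c2 c3 u v m : ℝ → ℝ) : ℝ → ℝ := fun x =>
  ((m x)⁻¹ * deriv (gam3 c3 u m) x
      + 3 * (gam1 c1 c2 c3 u v m x * gam3 c3 u m x - (gam2 c2 c3 u v m x) ^ 2))
    / gam3 c3 u m x

/-- `∇ₙ = d/dx − n(c₃′ + 3(c₁c₃ − c₂²))/c₃` is a covariant derivative:
for any tensor `φ` of degree `n` (i.e. transforming as `φ̃ = (u/μ)ⁿφ`),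
`Dφ̃ − nR̃φ̃ = μ⁻¹(u/μ)ⁿ(φ′ − nrφ)`, so `∇ₙφ` is a tensor of degree `n + 1`. -/
theorem covariant_derivative
    (a b : ℝ) (c1 c2 c3 u v m : ℝ → ℝ)
    (hc1 : AnalyticOnNhd ℝ c1 (Ioo a b)) (hc2 : AnalyticOnNhd ℝ c2 (Ioo a b))
    (hc3 : AnalyticOnNhd ℝ c3 (Ioo a b)) (hc30 : ∀ x ∈ Ioo a b, c3 x ≠ 0)
    (hu : AnalyticOnNhd ℝ u (Ioo a b)) (hv : AnalyticOnNhd ℝ v (Ioo a b))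
    (hm : AnalyticOnNhd ℝ m (Ioo a b))
    (hu0 : ∀ x ∈ Ioo a b, u x ≠ 0) (hm0 : ∀ x ∈ Ioo a b, m x ≠ 0) :
    ∀ n : ℤ, ∀ φ : ℝ → ℝ, (∀ x ∈ Ioo a b, DifferentiableAt ℝ φ x) →
      ∀ x ∈ Ioo a b,
        (m x)⁻¹ * deriv (fun t => (u t / m t) ^ n * φ t) x
            - (n : ℝ) * Rtil c1 c2 c3 u v m x * ((u x / m x) ^ n * φ x)
          = (1 / m x) * (u x / m x) ^ n *
              (deriv φ x
                - (n : ℝ) * ((deriv c3 x + 3 * (c1 x * c3 x - (c2 x) ^ 2)) / c3 x) * φ x) := by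
  intro n φ hφ x hx
  have hM := hm0 x hx
  have hU := hu0 x hx
  have hC := hc30 x hx
  have du := (hu x hx).differentiableAt.hasDerivAt
  have dm := (hm x hx).differentiableAt.hasDerivAt
  have dc := (hc3 x hx).differentiableAt.hasDerivAt
  have dφ := (hφ x hx).hasDerivAt
  have hq : u x / m x ≠ 0 := div_ne_zero hU hM
  have h3 : deriv (gam3 c3 u m) x =
      ((2 * u x * deriv u x * c3 x + (u x) ^ 2 * deriv c3 x) * m x
        - (u x) ^ 2 * c3 x * deriv m x) / (m x) ^ 2 := by
    have h := ((du.pow 2).mul dc).div dm hM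
    have h' : deriv (gam3 c3 u m) x = _ := h.deriv
    rw [h']
    simp
  have hR : Rtil c1 c2 c3 u v m x = (m x)⁻¹ * (deriv u x / u x - deriv m x / m x
      + (deriv c3 x + 3 * (c1 x * c3 x - (c2 x) ^ 2)) / c3 x) := by
    unfold Rtil
    rw [h3]
    unfold gam1 gam2 gam3
    field_simp
    ring
  have hp : deriv (fun t => (u t / m t) ^ n * φ t) x =
      (n : ℝ) * (u x / m x) ^ n * (deriv u x / u x - deriv m x / m x) * φ x
        + (u x / m x) ^ n * deriv φ x := by
    have h1 := (hasDerivAt_zpow n (u x / m x) (Or.inl hq)).comp x (du.div dm hM)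
    have h2 := h1.mul dφ
    have h' : deriv (fun t => (u t / m t) ^ n * φ t) x = _ := h2.deriv
    rw [h', zpow_sub_one₀ hq]
    simp only [Function.comp, Pi.div_apply]
    congr 1
    generalize (u x / m x) ^ n = P
    field_simp
  rw [hp, hR]
  ring
end

section
/- Let u, ν, μ be real analytic on an open interval I with u, μ nowhere vanishing. Suppose the Abel equation is in canonical form, i.e. c_1 = c_2 = 0 and c_3 = 1 on I, and suppose the transformed coefficients also satisfy γ_1 = γ_2 = 0 and γ_3 = 1 on I, where γ_1 = (c_1 + 2c_2ν + c_3ν²)/μ − u'/(3μu), γ_2 = u(c_2 + c_3ν)/μ, γ_3 = u²c_3/μ. Then ν ≡ 0 on I, u is constant on I, and μ = u² is constant on I. Consequently, the most general transformation of the pseudo-group sending a canonical form dY/dX = Y³ + J to another canonical form is Z = KY, W = (X + h)/K² with constants K ≠ 0 and h. -/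
open Set

/-- the only pseudo-group transformations sending a canonical form
(`c₁ = c₂ = 0`, `c₃ = 1`) to a canonical form (`γ₁ = γ₂ = 0`, `γ₃ = 1`) are
`ν ≡ 0`, `u ≡ K` constant, `μ ≡ K²`; hence `ξ = K²x + h`, i.e. `Z = KY`,
`W = (X + h)/K²` with constants `K ≠ 0`, `h`. -/
theorem canonical_to_canonical
    (a b : ℝ) (hab : a < b) (u v m : ℝ → ℝ)
    (hu : AnalyticOnNhd ℝ u (Ioo a b)) (hv : AnalyticOnNhd ℝ v (Ioo a b))
    (hm : AnalyticOnNhd ℝ m (Ioo a b))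
    (hu0 : ∀ x ∈ Ioo a b, u x ≠ 0) (hm0 : ∀ x ∈ Ioo a b, m x ≠ 0)
    (hγ1 : ∀ x ∈ Ioo a b, gam1 (fun _ => 0) (fun _ => 0) (fun _ => 1) u v m x = 0)
    (hγ2 : ∀ x ∈ Ioo a b, gam2 (fun _ => 0) (fun _ => 1) u v m x = 0)
    (hγ3 : ∀ x ∈ Ioo a b, gam3 (fun _ => 1) u m x = 1) :
    (∀ x ∈ Ioo a b, v x = 0) ∧
    ∃ K : ℝ, K ≠ 0 ∧ (∀ x ∈ Ioo a b, u x = K) ∧ (∀ x ∈ Ioo a b, m x = K ^ 2) ∧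
      ∀ ξ : ℝ → ℝ, (∀ x ∈ Ioo a b, HasDerivAt ξ (m x) x) →
        ∃ h : ℝ, ∀ x ∈ Ioo a b, ξ x = K ^ 2 * x + h := by
  have hv0 : ∀ x ∈ Ioo a b, v x = 0 := by
    intro x hx
    have h := hγ2 x hx
    simpa [gam2, hu0 x hx, hm0 x hx] using h
  have hdu : ∀ x ∈ Ioo a b, deriv u x = 0 := by
    intro x hx
    have h := hγ1 x hx
    simpa [gam1, hv0 x hx, hu0 x hx, hm0 x hx] using h
  have hmu : ∀ x ∈ Ioo a b, m x = u x ^ 2 := by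
    intro x hx
    have h := hγ3 x hx
    simp only [gam3, mul_one] at h
    exact ((div_eq_one_iff_eq (hm0 x hx)).1 h).symm
  obtain ⟨x0, hx0⟩ : (Ioo a b).Nonempty := nonempty_Ioo.2 hab
  have hconst : ∀ x ∈ Ioo a b, u x = u x0 := fun x hx =>
    isOpen_Ioo.is_const_of_deriv_eq_zero isPreconnected_Ioo hu.differentiableOn hdu hx hx0
  have hmK : ∀ x ∈ Ioo a b, m x = u x0 ^ 2 := fun x hx => by rw [hmu x hx, hconst x hx]
  refine ⟨hv0, u x0, hu0 x0 hx0, hconst, hmK, ?_⟩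
  intro ξ hξ
  have hd : ∀ x ∈ Ioo a b, HasDerivAt (fun y => ξ y - u x0 ^ 2 * y) 0 x := by
    intro x hx
    have h := (hξ x hx).sub ((hasDerivAt_id x).const_mul (u x0 ^ 2))
    rw [hmK x hx, mul_one, sub_self] at h
    exact h
  refine ⟨ξ x0 - u x0 ^ 2 * x0, fun x hx => ?_⟩
  have h := isOpen_Ioo.is_const_of_deriv_eq_zero isPreconnected_Ioo
    (fun y hy => (hd y hy).differentiableAt.differentiableWithinAt)
    (fun y hy => (hd y hy).deriv) hx hx0
  linarith
end
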